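/- The letters 0 and 1 each have frequency 1/2 in the sequence T: the limit as x → ∞ of (1/x)·#{N < x : T(N) = 0} equals 1/2, and the limit as x → ∞ of (1/x)·#{N < x : T(N) = 1} equals 1/2. -/

import Mathlib

/-- The golden mean φ = (1+√5)/2. -/
noncomputable def phi : ℝ := (1 + Real.sqrt 5) / 2

/-- `d : ℤ → ℕ` is a base-phi expansion of `N`: finitely supported, digits at most 1,
no two consecutive digits equal 1, and `∑ d i * φ^i = N`. -/
def IsBasePhi (N : ℕ) (d : ℤ → ℕ) : Prop :=
  {i : ℤ | d i ≠ 0}.Finite ∧ (∀ i, d i ≤ 1) ∧ (∀ i, d i * d (i + 1) = 0) ∧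
    ∑' i : ℤ, (d i : ℝ) * phi ^ i = (N : ℝ)

/-- The Lucas numbers: L 0 = 2, L 1 = 1, L (n+2) = L (n+1) + L n. -/
def Lucas : ℕ → ℕ
  | 0 => 2
  | 1 => 1
  | n + 2 => Lucas (n + 1) + Lucas n

/-- The sum of the digits of a (finitely supported) digit function. -/
noncomputable def digitSum (d : ℤ → ℕ) : ℕ := ∑' i : ℤ, d i

/-- `x` is a sum of `c` pairwise non-consecutive powers of `phi` with exponents in `[a, b]`. -/
def HasGoldenRep (a b : ℤ) (c : ℕ) (x : ℝ) : Prop :=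
  ∃ F : Finset ℤ, (∀ i ∈ F, a ≤ i ∧ i ≤ b ∧ i + 1 ∉ F) ∧ F.card = c ∧ ∑ i ∈ F, phi ^ i = x

theorem phi_pos : 0 < phi := by
  unfold phi
  positivity

theorem phi_sq : phi ^ 2 = phi + 1 := by
  have h := Real.sq_sqrt (show (0 : ℝ) ≤ 5 by norm_num)
  unfold phi
  nlinarith

theorem phi_zpow_add_two (i : ℤ) : phi ^ (i + 2) = phi ^ (i + 1) + phi ^ i := by
  rw [zpow_add₀ phi_pos.ne', zpow_add₀ phi_pos.ne']
  have := phi_sq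
  norm_cast
  rw [this]
  ring

theorem lucas_eq_phi_zpow (n : ℕ) :
    (Lucas (2 * n) : ℝ) = phi ^ (2 * n : ℤ) + phi ^ (-2 * n : ℤ) ∧
    (Lucas (2 * n + 1) : ℝ) = phi ^ (2 * n + 1 : ℤ) - phi ^ (-2 * n - 1 : ℤ) := by
  induction n with
  | zero =>
    have h := phi_zpow_add_two (-1)
    norm_num [Lucas] at h ⊢
    linarith
  | succ n ih =>
    obtain ⟨h0, h1⟩ := ih
    have e0 : Lucas (2 * (n + 1)) = Lucas (2 * n + 1) + Lucas (2 * n) := rfl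
    have e1 : Lucas (2 * (n + 1) + 1) = Lucas (2 * (n + 1)) + Lucas (2 * n + 1) := rfl
    have p0 := phi_zpow_add_two (2 * n)
    have p1 := phi_zpow_add_two (2 * n + 1)
    have p2 := phi_zpow_add_two (-2 * n - 2)
    have p3 := phi_zpow_add_two (-2 * n - 3)
    rw [e1, e0]
    push_cast
    rw [h0, h1]
    ring_nf at p0 p1 p2 p3 ⊢
    constructor <;> linarith

namespace HasGoldenRep

variable {a b : ℤ} {c : ℕ} {x : ℝ}

theorem mono {a' b' : ℤ} (h : HasGoldenRep a b c x) (ha : a' ≤ a) (hb : b ≤ b') :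
    HasGoldenRep a' b' c x := by
  obtain ⟨F, h1, h2⟩ := h
  exact ⟨F, fun i hi => ⟨ha.trans (h1 i hi).1, (h1 i hi).2.1.trans hb, (h1 i hi).2.2⟩, h2⟩

theorem insert_above (h : HasGoldenRep a b c x) {t : ℤ} (hb : b + 1 < t) (ha : a ≤ t) :
    HasGoldenRep a t (c + 1) (x + phi ^ t) := by
  obtain ⟨F, h1, h2, h3⟩ := h
  have ht : t ∉ F := fun hm => by have := (h1 t hm).2.1; omega
  have ht' : t + 1 ∉ F := fun hm => by have := (h1 _ hm).2.1; omega
  refine ⟨insert t F, ?_, by rw [Finset.card_insert_of_notMem ht, h2], ?_⟩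
  · intro i hi
    rcases Finset.mem_insert.1 hi with rfl | hi
    · exact ⟨ha, le_rfl, by simp [ht']⟩
    · obtain ⟨h4, h5, h6⟩ := h1 i hi
      refine ⟨h4, by omega, ?_⟩
      rw [Finset.mem_insert, not_or]
      exact ⟨by omega, h6⟩
  · rw [Finset.sum_insert ht, h3, add_comm]

theorem insert_below (h : HasGoldenRep a b c x) {t : ℤ} (ha : t + 1 < a) (hb : t ≤ b) :
    HasGoldenRep t b (c + 1) (x + phi ^ t) := by
  obtain ⟨F, h1, h2, h3⟩ := h
  have ht : t ∉ F := fun hm => by have := (h1 t hm).1; omega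
  have ht' : t + 1 ∉ F := fun hm => by have := (h1 _ hm).1; omega
  refine ⟨insert t F, ?_, by rw [Finset.card_insert_of_notMem ht, h2], ?_⟩
  · intro i hi
    rcases Finset.mem_insert.1 hi with rfl | hi
    · exact ⟨le_rfl, hb, by simp [ht']⟩
    · obtain ⟨h4, h5, h6⟩ := h1 i hi
      refine ⟨by omega, h5, ?_⟩
      rw [Finset.mem_insert, not_or]
      exact ⟨by omega, h6⟩
  · rw [Finset.sum_insert ht, h3, add_comm]

theorem exists_isBasePhi {N : ℕ} (h : HasGoldenRep a b c N) :
    ∃ d, IsBasePhi N d ∧ digitSum d = c := by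
  obtain ⟨F, h1, h2, h3⟩ := h
  refine ⟨fun i => if i ∈ F then 1 else 0, ⟨?_, ?_, ?_, ?_⟩, ?_⟩
  · exact F.finite_toSet.subset fun i hi => by simpa using hi
  · intro i
    dsimp only
    split_ifs <;> simp
  · intro i
    by_cases hi : i ∈ F
    · simp [(h1 i hi).2.2]
    · simp [hi]
  · rw [tsum_eq_sum (s := F) (fun i hi => by simp [hi]), ← h3]
    exact Finset.sum_congr rfl fun i hi => by simp [hi]
  · unfold digitSum
    rw [tsum_eq_sum (s := F) (fun i hi => by simp [hi]), ← h2, Finset.card_eq_sum_ones]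
    exact Finset.sum_congr rfl fun i hi => by simp [hi]

end HasGoldenRep

/-- `N` has a base-phi expansion with extreme exponents `2n+1` and `-(2n+2)`, and `c` further digits,
all of them at exponents in `[-(2n-1), 2n-1]`. -/
def HasOddCore (n c N : ℕ) : Prop :=
  HasGoldenRep (-(2 * n - 1)) (2 * n - 1) c
    (N - phi ^ (2 * n + 1 : ℤ) - phi ^ (-2 * n - 2 : ℤ))

/-- `N` has a base-phi expansion with `c` digits equal to 1, at exponents in `[-2n, 2n]`. -/
def HasEvenRep (n c N : ℕ) : Prop := HasGoldenRep (-(2 * n)) (2 * n) c N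

theorem HasEvenRep.succ {n c N : ℕ} (h : HasEvenRep n c N) : HasEvenRep (n + 1) c N :=
  h.mono (by push_cast; omega) (by push_cast; omega)

theorem HasEvenRep.add_lucas {n c N : ℕ} (h : HasEvenRep n c N) :
    HasEvenRep (n + 1) (c + 2) (Lucas (2 * n + 2) + N) := by
  have h1 := (h.insert_above (t := 2 * n + 2) (by omega) (by omega)).insert_below
    (t := -2 * n - 2) (by omega) (by omega)
  have e := (lucas_eq_phi_zpow (n + 1)).1
  have e' : 2 * (n + 1) = 2 * n + 2 := rfl
  rw [e'] at e
  unfold HasEvenRep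
  convert h1 using 1
  · push_cast; ring
  · push_cast; ring
  · push_cast at e ⊢
    rw [e]
    ring_nf

theorem HasOddCore.hasEvenRep {n c N : ℕ} (h : HasOddCore n c N) :
    HasEvenRep (n + 1) (c + 2) N := by
  have h1 := (h.insert_above (t := 2 * n + 1) (by omega) (by omega)).insert_below
    (t := -2 * n - 2) (by omega) (by omega)
  have h2 := h1.mono (a' := -(2 * (n + 1 : ℕ))) (b' := 2 * (n + 1 : ℕ)) (by push_cast; omega)
    (by push_cast; omega)
  unfold HasEvenRep
  convert h2 using 1
  ring

theorem HasOddCore.add_lucas_even {n c N : ℕ} (h : HasOddCore n c N) :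
    HasOddCore (n + 1) (c + 1) (Lucas (2 * n + 2) + N) := by
  have h1 := (h.mono (a' := -(2 * n - 1)) (b' := 2 * n + 1) le_rfl (by omega)).insert_below
    (t := -2 * n - 1) (by omega) (by omega)
  have e := (lucas_eq_phi_zpow (n + 1)).1
  have e' : 2 * (n + 1) = 2 * n + 2 := rfl
  rw [e'] at e
  have p1 := phi_zpow_add_two (2 * n + 1)
  have p2 := phi_zpow_add_two (-2 * n - 3)
  have p3 := phi_zpow_add_two (-2 * n - 4)
  unfold HasOddCore
  convert h1 using 1
  · push_cast; ring
  · push_cast; ring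
  · push_cast at e ⊢
    rw [e]
    ring_nf at p1 p2 p3 ⊢
    linarith

theorem HasOddCore.add_lucas_odd {n c N : ℕ} (h : HasOddCore n c N) :
    HasOddCore (n + 1) (c + 1) (Lucas (2 * n + 3) + N) := by
  have h1 := (h.insert_above (t := 2 * n + 1) (by omega) (by omega)).mono
    (a' := -(2 * n + 1)) (b' := 2 * n + 1) (by omega) le_rfl
  have e := (lucas_eq_phi_zpow (n + 1)).2
  have e' : 2 * (n + 1) + 1 = 2 * n + 3 := rfl
  rw [e'] at e
  have p3 := phi_zpow_add_two (-2 * n - 4)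
  unfold HasOddCore
  convert h1 using 1
  · push_cast; ring
  · push_cast; ring
  · push_cast at e ⊢
    rw [e]
    ring_nf at p3 ⊢
    linarith

theorem HasEvenRep.hasOddCore {n c N : ℕ} (h : HasEvenRep n c N) :
    HasOddCore (n + 2) (c + 2) (Lucas (2 * n + 5) + Lucas (2 * n + 2) + N) := by
  have h1 := ((h.insert_above (t := 2 * n + 2) (by omega) (by omega)).insert_below
    (t := -2 * n - 3) (by omega) (by omega)).mono
    (a' := -(2 * n + 3)) (b' := 2 * n + 3) (by omega) (by omega)
  have e := (lucas_eq_phi_zpow (n + 1)).1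
  have e' : 2 * (n + 1) = 2 * n + 2 := rfl
  rw [e'] at e
  have f := (lucas_eq_phi_zpow (n + 2)).2
  have f' : 2 * (n + 2) + 1 = 2 * n + 5 := rfl
  rw [f'] at f
  have p1 := phi_zpow_add_two (-2 * n - 4)
  have p2 := phi_zpow_add_two (-2 * n - 6)
  unfold HasOddCore
  convert h1 using 1
  · push_cast; ring
  · push_cast; ring
  · push_cast at e f ⊢
    rw [e, f]
    ring_nf at p1 p2 ⊢
    linarith

theorem lucas_add_two (n : ℕ) : Lucas (n + 2) = Lucas (n + 1) + Lucas n := rfl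

theorem exists_evenRep_and_oddCore (n : ℕ) :
    (∀ k ≤ Lucas (2 * n + 1), ∃ c, HasEvenRep n c k) ∧
    (∀ k ≤ Lucas (2 * n + 3), ∃ c, HasEvenRep (n + 1) c k) ∧
    (∀ k, 1 ≤ k → k + 1 ≤ Lucas (2 * n) → ∃ c, HasOddCore n c (Lucas (2 * n + 1) + k)) ∧
    (∀ k, 1 ≤ k → k + 1 ≤ Lucas (2 * n + 2) →
      ∃ c, HasOddCore (n + 1) c (Lucas (2 * n + 3) + k)) := by
  have step (n : ℕ) (hA : ∀ k ≤ Lucas (2 * n + 1), ∃ c, HasEvenRep n c k)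
      (hQ : ∀ k, 1 ≤ k → k + 1 ≤ Lucas (2 * n) → ∃ c, HasOddCore n c (Lucas (2 * n + 1) + k)) :
      ∀ k ≤ Lucas (2 * n + 3), ∃ c, HasEvenRep (n + 1) c k := by
    intro k hk
    have e1 : Lucas (2 * n + 2) = Lucas (2 * n + 1) + Lucas (2 * n) := rfl
    have e2 : Lucas (2 * n + 3) = Lucas (2 * n + 2) + Lucas (2 * n + 1) := rfl
    rcases le_or_gt k (Lucas (2 * n + 1)) with h | h
    · obtain ⟨c, hc⟩ := hA k h
      exact ⟨c, hc.succ⟩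
    obtain ⟨j, rfl⟩ := Nat.exists_eq_add_of_lt h
    rcases lt_or_ge (Lucas (2 * n + 1) + j + 1) (Lucas (2 * n + 2)) with h' | h'
    · obtain ⟨c, hc⟩ := hQ (j + 1) (by omega) (by omega)
      exact ⟨_, hc.hasEvenRep⟩
    · obtain ⟨i, hi⟩ := Nat.exists_eq_add_of_le h'
      obtain ⟨c, hc⟩ := hA i (by omega)
      exact ⟨_, hi ▸ hc.add_lucas⟩
  have stepQ (n : ℕ)
      (hQ : ∀ k, 1 ≤ k → k + 1 ≤ Lucas (2 * n) → ∃ c, HasOddCore n c (Lucas (2 * n + 1) + k))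
      (hK : ∀ k, Lucas (2 * n) ≤ k → k ≤ Lucas (2 * n + 1) →
        ∃ c, HasOddCore (n + 1) c (Lucas (2 * n + 3) + k)) :
      ∀ k, 1 ≤ k → k + 1 ≤ Lucas (2 * n + 2) →
        ∃ c, HasOddCore (n + 1) c (Lucas (2 * n + 3) + k) := by
    intro k hk hk'
    have e1 : Lucas (2 * n + 2) = Lucas (2 * n + 1) + Lucas (2 * n) := rfl
    have e2 : Lucas (2 * n + 3) = Lucas (2 * n + 2) + Lucas (2 * n + 1) := rfl
    rcases lt_or_ge k (Lucas (2 * n)) with h | h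
    · obtain ⟨c, hc⟩ := hQ k hk h
      have := hc.add_lucas_even
      rw [← add_assoc, ← e2] at this
      exact ⟨_, this⟩
    rcases le_or_gt k (Lucas (2 * n + 1)) with h' | h'
    · exact hK k h h'
    obtain ⟨j, rfl⟩ := Nat.exists_eq_add_of_lt h'
    obtain ⟨c, hc⟩ := hQ (j + 1) (by omega) (by omega)
    exact ⟨_, hc.add_lucas_odd⟩
  induction n with
  | zero =>
    have hA : ∀ k ≤ Lucas (2 * 0 + 1), ∃ c, HasEvenRep 0 c k := by
      intro k hk
      have : k ≤ 1 := hk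
      interval_cases k
      · exact ⟨0, ∅, by simp, by simp, by simp⟩
      · exact ⟨1, {0}, by simp, by simp, by simp⟩
    have hQ : ∀ k, 1 ≤ k → k + 1 ≤ Lucas (2 * 0) →
        ∃ c, HasOddCore 0 c (Lucas (2 * 0 + 1) + k) := by
      intro k hk hk'
      have : k + 1 ≤ 2 := hk'
      obtain rfl : k = 1 := by omega
      refine ⟨0, ∅, by simp, by simp, ?_⟩
      have p1 := phi_zpow_add_two (-1)
      have p2 := phi_zpow_add_two (-2)
      norm_num [Lucas] at p1 p2 ⊢
      linarith
    refine ⟨hA, step 0 hA hQ, hQ, stepQ 0 hQ ?_⟩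
    intro k h1 h2
    have h1 : 2 ≤ k := h1
    have h2 : k ≤ 1 := h2
    omega
  | succ n ih =>
    obtain ⟨hA, hA', hQ, hQ'⟩ := ih
    refine ⟨hA', step (n + 1) hA' hQ', hQ', stepQ (n + 1) hQ' ?_⟩
    intro k h1 h2
    have h1 : Lucas (2 * n + 2) ≤ k := h1
    have h2 : k ≤ Lucas (2 * n + 3) := h2
    obtain ⟨j, rfl⟩ := Nat.exists_eq_add_of_le h1
    have e2 : Lucas (2 * n + 3) = Lucas (2 * n + 2) + Lucas (2 * n + 1) := rfl
    obtain ⟨c, hc⟩ := hA j (by omega)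
    have := hc.hasOddCore
    rw [add_assoc] at this
    exact ⟨_, this⟩

theorem le_lucas (n : ℕ) : n + 1 ≤ Lucas (2 * n + 1) ∧ n + 2 ≤ Lucas (2 * n) := by
  induction n with
  | zero => exact ⟨le_rfl, le_rfl⟩
  | succ n ih =>
    have e1 : Lucas (2 * n + 2) = Lucas (2 * n + 1) + Lucas (2 * n) := rfl
    have e2 : Lucas (2 * n + 3) = Lucas (2 * n + 2) + Lucas (2 * n + 1) := rfl
    constructor
    · change _ ≤ Lucas (2 * n + 3)
      omega
    · change _ ≤ Lucas (2 * n + 2)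
      omega

section SignSum

/-- The sum of `(-1)^{T N}` over `N < x`. -/
def signSum (T : ℕ → ℕ) (x : ℕ) : ℝ := ∑ N ∈ Finset.range x, (-1 : ℝ) ^ T N

theorem signSum_add_sub (T : ℕ → ℕ) (x y : ℕ) :
    signSum T (x + y) - signSum T x = ∑ j ∈ Finset.range y, (-1 : ℝ) ^ T (x + j) := by
  unfold signSum
  rw [Finset.sum_range_add]
  ring

theorem abs_signSum_add_sub_le (T : ℕ → ℕ) (x y : ℕ) :
    |signSum T (x + y) - signSum T x| ≤ y := by
  rw [signSum_add_sub]
  refine (Finset.abs_sum_le_sum_abs _ _).trans ?_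
  simp

theorem abs_signSum_le (T : ℕ → ℕ) (x : ℕ) : |signSum T x| ≤ x := by
  have := abs_signSum_add_sub_le T 0 x
  simpa [signSum] using this

/-- The parity of the number of digits in base phi is what `T` computes. -/
def IsDigitParity (T : ℕ → ℕ) : Prop :=
  ∀ (N : ℕ) (d : ℤ → ℕ), IsBasePhi N d → T N = digitSum d % 2

variable {T : ℕ → ℕ}

theorem IsDigitParity.eq_mod (hT : IsDigitParity T) {n c N : ℕ} (h : HasEvenRep n c N) :
    T N = c % 2 := by
  obtain ⟨d, hd, hc⟩ := h.exists_isBasePhi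
  rw [hT N d hd, hc]

theorem IsDigitParity.sign_eq (hT : IsDigitParity T) {n c N : ℕ} (h : HasEvenRep n c N) :
    (-1 : ℝ) ^ T N = (-1) ^ c := by
  rw [hT.eq_mod h, ← neg_one_pow_eq_pow_mod_two]

theorem IsDigitParity.lt_two (hT : IsDigitParity T) (N : ℕ) : T N < 2 := by
  obtain ⟨c, hc⟩ := (exists_evenRep_and_oddCore N).1 N (by have := (le_lucas N).1; omega)
  rw [hT.eq_mod hc]
  omega

theorem signSum_even (hT : IsDigitParity T) (n : ℕ) {k : ℕ} (hk : k ≤ Lucas (2 * n + 1) + 1) :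
    signSum T (Lucas (2 * n + 2) + k) = signSum T (Lucas (2 * n + 2)) + signSum T k := by
  rw [← sub_eq_iff_eq_add', signSum_add_sub, signSum]
  refine Finset.sum_congr rfl fun j hj => ?_
  rw [Finset.mem_range] at hj
  obtain ⟨c, hc⟩ := (exists_evenRep_and_oddCore n).1 j (by omega)
  rw [hT.sign_eq hc, hT.sign_eq hc.add_lucas]
  ring

theorem signSum_odd_left (hT : IsDigitParity T) (n : ℕ) {k : ℕ} (hk : k + 1 ≤ Lucas (2 * n)) :
    signSum T (Lucas (2 * n + 3) + 1 + k) - signSum T (Lucas (2 * n + 3) + 1) =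
      -(signSum T (Lucas (2 * n + 1) + 1 + k) - signSum T (Lucas (2 * n + 1) + 1)) := by
  rw [signSum_add_sub, signSum_add_sub, ← Finset.sum_neg_distrib]
  refine Finset.sum_congr rfl fun j hj => ?_
  rw [Finset.mem_range] at hj
  obtain ⟨c, hc⟩ := (exists_evenRep_and_oddCore n).2.2.1 (1 + j) (by omega) (by omega)
  have h := hc.add_lucas_even.hasEvenRep
  rw [← add_assoc, ← lucas_add_two (2 * n + 1)] at h
  rw [add_assoc, add_assoc, hT.sign_eq hc.hasEvenRep, hT.sign_eq h]
  ring

theorem signSum_odd_mid (hT : IsDigitParity T) (n : ℕ) {k : ℕ} (hk : k ≤ Lucas (2 * n + 1) + 1) :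
    signSum T (Lucas (2 * n + 5) + Lucas (2 * n + 2) + k) =
      signSum T (Lucas (2 * n + 5) + Lucas (2 * n + 2)) + signSum T k := by
  rw [← sub_eq_iff_eq_add', signSum_add_sub, signSum]
  refine Finset.sum_congr rfl fun j hj => ?_
  rw [Finset.mem_range] at hj
  obtain ⟨c, hc⟩ := (exists_evenRep_and_oddCore n).1 j (by omega)
  rw [hT.sign_eq hc, hT.sign_eq hc.hasOddCore.hasEvenRep]
  ring

theorem signSum_odd_right (hT : IsDigitParity T) (n : ℕ) {k : ℕ} (hk : k + 1 ≤ Lucas (2 * n)) :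
    signSum T (Lucas (2 * n + 3) + Lucas (2 * n + 1) + 1 + k)
        - signSum T (Lucas (2 * n + 3) + Lucas (2 * n + 1) + 1) =
      -(signSum T (Lucas (2 * n + 1) + 1 + k) - signSum T (Lucas (2 * n + 1) + 1)) := by
  rw [signSum_add_sub, signSum_add_sub, ← Finset.sum_neg_distrib]
  refine Finset.sum_congr rfl fun j hj => ?_
  rw [Finset.mem_range] at hj
  obtain ⟨c, hc⟩ := (exists_evenRep_and_oddCore n).2.2.1 (1 + j) (by omega) (by omega)
  rw [add_assoc, add_assoc, add_assoc, hT.sign_eq hc.hasEvenRep,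
    hT.sign_eq hc.add_lucas_odd.hasEvenRep]
  ring

/-- `signSum` over the initial segment ending at the Lucas number of index `2n+1`. -/
def initialSum (T : ℕ → ℕ) (n : ℕ) : ℝ := signSum T (Lucas (2 * n + 1) + 1)

/-- `signSum` over the integers strictly between the Lucas numbers of indices `2n+1`, `2n+2`. -/
def gapSum (T : ℕ → ℕ) (n : ℕ) : ℝ :=
  signSum T (Lucas (2 * n + 2)) - signSum T (Lucas (2 * n + 1) + 1)

theorem initialSum_succ (hT : IsDigitParity T) (n : ℕ) :
    initialSum T (n + 1) = 2 * initialSum T n + gapSum T n := by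
  have h := signSum_even hT n le_rfl
  rw [← add_assoc, ← lucas_add_two (2 * n + 1)] at h
  unfold initialSum gapSum
  change signSum T (Lucas (2 * n + 1 + 2) + 1) = _
  linarith

theorem signSum_odd_left_end (hT : IsDigitParity T) (n : ℕ) :
    signSum T (Lucas (2 * n + 3) + Lucas (2 * n)) =
      signSum T (Lucas (2 * n + 3) + 1) - gapSum T n := by
  obtain ⟨k, hk⟩ := Nat.exists_eq_add_of_le' (le_lucas n).2
  have h := signSum_odd_left hT n (k := n + 1 + k) (by omega)
  have e : Lucas (2 * n + 2) = Lucas (2 * n + 1) + Lucas (2 * n) := rfl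
  unfold gapSum
  rw [show Lucas (2 * n + 3) + Lucas (2 * n) = Lucas (2 * n + 3) + 1 + (n + 1 + k) by omega,
    show Lucas (2 * n + 2) = Lucas (2 * n + 1) + 1 + (n + 1 + k) by omega]
  linarith

theorem signSum_odd_mid_end (hT : IsDigitParity T) (n : ℕ) :
    signSum T (Lucas (2 * n + 5) + Lucas (2 * n + 3) + 1) =
      signSum T (Lucas (2 * n + 5) + 1) - gapSum T (n + 1) + initialSum T n := by
  have h := signSum_odd_mid hT n le_rfl
  have h' := signSum_odd_left_end hT (n + 1)
  have e : Lucas (2 * n + 3) = Lucas (2 * n + 2) + Lucas (2 * n + 1) := rfl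
  change signSum T (Lucas (2 * n + 5) + Lucas (2 * n + 2)) =
    signSum T (Lucas (2 * n + 5) + 1) - gapSum T (n + 1) at h'
  rw [show Lucas (2 * n + 5) + Lucas (2 * n + 3) + 1 =
    Lucas (2 * n + 5) + Lucas (2 * n + 2) + (Lucas (2 * n + 1) + 1) by omega, h, h']
  rfl

theorem gapSum_add_two (hT : IsDigitParity T) (n : ℕ) :
    gapSum T (n + 2) = -2 * gapSum T (n + 1) + initialSum T n := by
  obtain ⟨k, hk⟩ := Nat.exists_eq_add_of_le' (le_lucas (n + 1)).2
  have h := signSum_odd_right hT (n + 1) (k := n + 2 + k) (by omega)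
  have h' := signSum_odd_mid_end hT n
  have hk' : Lucas (2 * n + 2) = k + (n + 1 + 2) := hk
  have e2 : Lucas (2 * n + 3) = Lucas (2 * n + 2) + Lucas (2 * n + 1) := rfl
  have e3 : Lucas (2 * n + 4) = Lucas (2 * n + 3) + Lucas (2 * n + 2) := rfl
  have e4 : Lucas (2 * n + 5) = Lucas (2 * n + 4) + Lucas (2 * n + 3) := rfl
  have e5 : Lucas (2 * n + 6) = Lucas (2 * n + 5) + Lucas (2 * n + 4) := rfl
  change signSum T (Lucas (2 * n + 5) + Lucas (2 * n + 3) + 1 + (n + 2 + k))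
    - signSum T (Lucas (2 * n + 5) + Lucas (2 * n + 3) + 1) =
      -(signSum T (Lucas (2 * n + 3) + 1 + (n + 2 + k)) - signSum T (Lucas (2 * n + 3) + 1)) at h
  rw [show Lucas (2 * n + 5) + Lucas (2 * n + 3) + 1 + (n + 2 + k) = Lucas (2 * n + 6) by omega,
    show Lucas (2 * n + 3) + 1 + (n + 2 + k) = Lucas (2 * n + 4) by omega] at h
  have g1 : gapSum T (n + 2) = signSum T (Lucas (2 * n + 6)) - signSum T (Lucas (2 * n + 5) + 1) :=
    rfl
  have g2 : gapSum T (n + 1) = signSum T (Lucas (2 * n + 4)) - signSum T (Lucas (2 * n + 3) + 1) :=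
    rfl
  linarith

theorem initialSum_add_three (hT : IsDigitParity T) (n : ℕ) :
    initialSum T (n + 3) = 4 * initialSum T (n + 1) + initialSum T n := by
  have h1 := initialSum_succ hT (n + 1)
  have h2 := initialSum_succ hT (n + 2)
  have h3 := gapSum_add_two hT n
  rw [h2, h3]
  linarith

theorem abs_initialSum_le (hT : IsDigitParity T) (n : ℕ) :
    |initialSum T n| ≤ 2 * (5 / 2) ^ n := by
  induction n using Nat.strong_induction_on with
  | _ n ih =>
    match n, ih with
    | 0, _ => exact (abs_signSum_le T _).trans (by norm_num [Lucas])
    | 1, _ => exact (abs_signSum_le T _).trans (by norm_num [Lucas])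
    | 2, _ => exact (abs_signSum_le T _).trans (by norm_num [Lucas])
    | n + 3, ih =>
      have h1 := ih (n + 1) (by omega)
      have h0 := ih n (by omega)
      have hp : (0 : ℝ) < (5 / 2) ^ n := by positivity
      rw [initialSum_add_three hT, abs_le]
      rw [abs_le] at h0 h1
      rw [pow_succ] at h1
      rw [pow_add]
      constructor <;> linarith

theorem abs_gapSum_le (hT : IsDigitParity T) (n : ℕ) : |gapSum T n| ≤ 9 * (5 / 2) ^ n := by
  have h := initialSum_succ hT n
  have h0 := abs_le.1 (abs_initialSum_le hT n)
  have h1 := abs_le.1 (abs_initialSum_le hT (n + 1))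
  rw [pow_succ] at h1
  rw [abs_le]
  constructor <;> linarith

theorem abs_signSum_le_pow (hT : IsDigitParity T) (n : ℕ) :
    (∀ x ≤ Lucas (2 * n + 1) + 1, |signSum T x| ≤ 8 * (5 / 2) ^ n) ∧
    (∀ x ≤ Lucas (2 * n + 3) + 1, |signSum T x| ≤ 8 * (5 / 2) ^ (n + 1)) ∧
    (∀ k, k + 1 ≤ Lucas (2 * n + 2) →
      |signSum T (Lucas (2 * n + 3) + 1 + k) - initialSum T (n + 1)| ≤ 8 * (5 / 2) ^ (n + 1)) := by
  induction n with
  | zero =>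
    refine ⟨fun x hx => ?_, fun x hx => ?_, fun k hk => ?_⟩
    · have hx : x ≤ 2 := hx
      have hx : (x : ℝ) ≤ 2 := mod_cast hx
      have := abs_signSum_le T x
      norm_num
      linarith
    · have hx : x ≤ 5 := hx
      have hx : (x : ℝ) ≤ 5 := mod_cast hx
      have := abs_signSum_le T x
      norm_num
      linarith
    · have hk : k + 1 ≤ 3 := hk
      have hk : (k : ℝ) + 1 ≤ 3 := mod_cast hk
      have : |_ - initialSum T 1| ≤ _ := abs_signSum_add_sub_le T (Lucas (2 * 0 + 3) + 1) k
      norm_num at this ⊢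
      linarith
  | succ n ih =>
    obtain ⟨hA, hA', hQ⟩ := ih
    have e1 : Lucas (2 * n + 3) = Lucas (2 * n + 2) + Lucas (2 * n + 1) := rfl
    have e2 : Lucas (2 * n + 4) = Lucas (2 * n + 3) + Lucas (2 * n + 2) := rfl
    have e3 : Lucas (2 * n + 5) = Lucas (2 * n + 4) + Lucas (2 * n + 3) := rfl
    have hp : (0 : ℝ) < (5 / 2) ^ n := by positivity
    have a0 := abs_le.1 (abs_initialSum_le hT n)
    have a1 := abs_le.1 (abs_initialSum_le hT (n + 1))
    have g1 := abs_le.1 (abs_gapSum_le hT (n + 1))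
    have ga : gapSum T (n + 1) = signSum T (Lucas (2 * n + 4)) - initialSum T (n + 1) := rfl
    rw [pow_succ] at a1 g1
    refine ⟨hA', fun x hx => ?_, fun k hk => ?_⟩
    · change x ≤ Lucas (2 * n + 5) + 1 at hx
      rcases le_or_gt x (Lucas (2 * n + 3) + 1) with h | h
      · have := hA' x h
        rw [pow_succ _ (n + 1)]
        rw [pow_succ] at this ⊢
        linarith
      rcases lt_or_ge x (Lucas (2 * n + 4)) with h' | h'
      · obtain ⟨k, rfl⟩ := Nat.exists_eq_add_of_le h.le
        have := abs_le.1 (hQ k (by omega))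
        rw [pow_succ _ (n + 1)]
        rw [pow_succ] at this ⊢
        rw [abs_le]
        constructor <;> linarith
      · obtain ⟨k, rfl⟩ := Nat.exists_eq_add_of_le h'
        have hk : k ≤ Lucas (2 * n + 3) + 1 := by omega
        have h3 : signSum T (Lucas (2 * n + 4) + k) = signSum T (Lucas (2 * n + 4)) + signSum T k :=
          signSum_even hT (n + 1) hk
        have := abs_le.1 (hA' k hk)
        rw [pow_succ _ (n + 1)]
        rw [pow_succ] at this ⊢
        rw [h3, abs_le]
        constructor <;> linarith
    · change k + 1 ≤ Lucas (2 * n + 4) at hk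
      change |signSum T (Lucas (2 * n + 5) + 1 + k) - signSum T (Lucas (2 * n + 5) + 1)| ≤ _
      rcases lt_or_ge k (Lucas (2 * n + 2)) with h | h
      · have h3 : signSum T (Lucas (2 * n + 5) + 1 + k) - signSum T (Lucas (2 * n + 5) + 1) =
            -(signSum T (Lucas (2 * n + 3) + 1 + k) - initialSum T (n + 1)) :=
          signSum_odd_left hT (n + 1) h
        rw [h3, abs_neg]
        have := hQ k h
        rw [pow_succ _ (n + 1)]
        rw [pow_succ] at this ⊢
        linarith
      rcases le_or_gt k (Lucas (2 * n + 3)) with h' | h'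
      · obtain ⟨j, rfl⟩ := Nat.exists_eq_add_of_le h
        have h3 := signSum_odd_mid hT n (k := j + 1) (by omega)
        have h4 : signSum T (Lucas (2 * n + 5) + Lucas (2 * n + 2)) =
          signSum T (Lucas (2 * n + 5) + 1) - gapSum T (n + 1) := signSum_odd_left_end hT (n + 1)
        have := abs_le.1 (hA' (j + 1) (by omega))
        rw [show Lucas (2 * n + 5) + 1 + (Lucas (2 * n + 2) + j) =
          Lucas (2 * n + 5) + Lucas (2 * n + 2) + (j + 1) by omega, h3, h4]
        rw [pow_succ _ (n + 1)]
        rw [pow_succ] at this ⊢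
        rw [abs_le]
        constructor <;> linarith
      · obtain ⟨j, rfl⟩ := Nat.exists_eq_add_of_le h'.le
        have hj : j + 1 ≤ Lucas (2 * n + 2) := by omega
        have h3 : signSum T (Lucas (2 * n + 5) + Lucas (2 * n + 3) + 1 + j)
            - signSum T (Lucas (2 * n + 5) + Lucas (2 * n + 3) + 1) =
            -(signSum T (Lucas (2 * n + 3) + 1 + j) - initialSum T (n + 1)) :=
          signSum_odd_right hT (n + 1) hj
        have h4 := signSum_odd_mid_end hT n
        have := abs_le.1 (hQ j hj)
        rw [show Lucas (2 * n + 5) + 1 + (Lucas (2 * n + 3) + j) =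
          Lucas (2 * n + 5) + Lucas (2 * n + 3) + 1 + j by omega]
        rw [pow_succ _ (n + 1)]
        rw [pow_succ] at this ⊢
        rw [abs_le]
        constructor <;> linarith

theorem pow_le_lucas (n : ℕ) :
    (13 / 5 : ℝ) ^ n ≤ Lucas (2 * n + 1) ∧ 3 / 5 * (13 / 5 : ℝ) ^ n ≤ Lucas (2 * n) := by
  induction n with
  | zero => norm_num [Lucas]
  | succ n ih =>
    have e1 : Lucas (2 * (n + 1)) = Lucas (2 * n + 1) + Lucas (2 * n) := rfl
    have e2 : Lucas (2 * (n + 1) + 1) = Lucas (2 * (n + 1)) + Lucas (2 * n + 1) := rfl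
    have hp : (0 : ℝ) < (13 / 5) ^ n := by positivity
    rw [e2, e1, pow_succ]
    push_cast
    constructor <;> linarith [ih.1, ih.2]

theorem abs_signSum_le_mul (hT : IsDigitParity T) {n x : ℕ} (hx : Lucas (2 * n + 1) + 1 < x) :
    |signSum T x| ≤ 20 * (25 / 26) ^ n * x := by
  obtain ⟨m, hm⟩ : ∃ m, x ≤ Lucas (2 * m + 1) + 1 := ⟨x, by have := (le_lucas x).1; omega⟩
  induction m with
  | zero =>
    have : Lucas (2 * 0 + 1) = 1 := rfl
    have := (le_lucas n).1
    omega
  | succ m ih =>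
    rcases le_or_gt x (Lucas (2 * m + 1) + 1) with h | h
    · exact ih h
    have hnm : n ≤ m := by
      by_contra! hlt
      have mono : Monotone fun k => Lucas (2 * k + 1) := by
        refine monotone_nat_of_le_succ fun k => ?_
        change _ ≤ Lucas (2 * k + 2) + Lucas (2 * k + 1)
        omega
      have : Lucas (2 * (m + 1) + 1) ≤ Lucas (2 * n + 1) := mono hlt
      omega
    have h1 := (abs_signSum_le_pow hT m).2.1 x hm
    have h2 : (Lucas (2 * m + 1) : ℝ) ≤ x := by exact_mod_cast (by omega)
    have h3 := (pow_le_lucas m).1.trans h2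
    calc |signSum T x| ≤ 20 * (5 / 2) ^ m := by rw [pow_succ] at h1; linarith
      _ = 20 * (25 / 26) ^ m * (13 / 5) ^ m := by rw [mul_assoc, ← mul_pow]; norm_num
      _ ≤ 20 * (25 / 26) ^ n * x := by
        gcongr ?_ * ?_
        gcongr 20 * ?_
        exact pow_le_pow_of_le_one (by norm_num) (by norm_num) hnm

theorem tendsto_signSum_div (hT : IsDigitParity T) :
    Filter.Tendsto (fun x : ℕ => signSum T x / x) Filter.atTop (nhds 0) := by
  rw [Metric.tendsto_atTop]
  intro ε hε
  obtain ⟨n, hn⟩ := exists_pow_lt_of_lt_one (show (0 : ℝ) < ε / 20 by positivity)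
    (show (25 / 26 : ℝ) < 1 by norm_num)
  refine ⟨Lucas (2 * n + 1) + 2, fun x hx => ?_⟩
  have hx0 : (0 : ℝ) < x := by exact_mod_cast (by omega)
  have h := abs_signSum_le_mul hT (show Lucas (2 * n + 1) + 1 < x by omega)
  rw [Real.dist_eq, sub_zero, abs_div, Nat.abs_cast, div_lt_iff₀ hx0]
  refine h.trans_lt ?_
  gcongr
  linarith

theorem signSum_eq_card (hT : IsDigitParity T) (x : ℕ) :
    (((Finset.range x).filter fun N => T N = 0).card : ℝ) = (x + signSum T x) / 2 ∧
    (((Finset.range x).filter fun N => T N = 1).card : ℝ) = (x - signSum T x) / 2 := by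
  have hx : (x : ℝ) = ∑ N ∈ Finset.range x, 1 := by simp
  rw [Finset.card_filter, Finset.card_filter, signSum, hx, ← Finset.sum_add_distrib,
    ← Finset.sum_sub_distrib, Finset.sum_div, Finset.sum_div]
  push_cast
  constructor <;> refine Finset.sum_congr rfl fun N _ => ?_
  all_goals
    have := hT.lt_two N
    interval_cases T N <;> norm_num

end SignSum

/-- The letters 0 and 1 each have frequency 1/2 in the sequence `T`. -/
theorem freq_letters (T : ℕ → ℕ)
    (hT : ∀ (N : ℕ) (d : ℤ → ℕ), IsBasePhi N d → T N = digitSum d % 2) :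
    Filter.Tendsto
      (fun x : ℕ => (((Finset.range x).filter fun N => T N = 0).card : ℝ) / x)
      Filter.atTop (nhds (1 / 2)) ∧
    Filter.Tendsto
      (fun x : ℕ => (((Finset.range x).filter fun N => T N = 1).card : ℝ) / x)
      Filter.atTop (nhds (1 / 2)) := by
  have hlim := tendsto_signSum_div hT
  have h0 := (hlim.const_add 1).div_const 2
  have h1 := (hlim.const_sub 1).div_const 2
  rw [add_zero] at h0
  rw [sub_zero] at h1
  constructor
  · refine h0.congr' ?_
    filter_upwards [Filter.eventually_gt_atTop 0] with x hx
    rw [(signSum_eq_card hT x).1]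
    field_simp
  · refine h1.congr' ?_
    filter_upwards [Filter.eventually_gt_atTop 0] with x hx
    rw [(signSum_eq_card hT x).2]
    field_simp
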